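/- Let p ≥ 5 be a prime with p ≠ 11. If b₂₁((11p^2 − 5)/6) is odd, then for all integers n, k ≥ 0 and every integer β with 1 ≤ β < p, one has b₂₁(4p^{4k+4} n + 4p^{4k+3} β + (11p^{4k+4} − 5)/6) ≡ 0 (mod 2). -/

import Mathlib

/-- `b21 n` is the number of 21-regular partitions of `n`,
i.e. partitions of `n` none of whose parts is divisible by 21. -/
def b21 (n : ℕ) : ℕ :=
  (Finset.univ.filter fun c : n.Partition => ∀ i ∈ c.parts, ¬ (21 ∣ i)).card

/-!
Modulo 2, write `E` for Euler's product `∏ (1 - Xⁱ)`, so that `∑ b₂₁(n) Xⁿ = E(X²¹) / E`.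
Involutions on the representations of integers by `x² + 2y²`, `x² + 8y²` and `x² + 7y²` give three
theta identities, among them Jacobi's for `E³`, and together they show that `b₂₁(4n + 1)` has the
parity of the number of representations `24n + 11 = 3y² + 8z²` with `y, z ≥ 0` and `3 ∤ y`.

If a multiple of `p` has such a representation with `p ∤ y`, then `-6` is a square modulo `p`, hence
`p² = u² + 24v²` with `p ∤ v`, by Thue's lemma. When `3 ∣ v`, multiplication of `y√3 + z√-8` by
`u - v√-24` matches the representations of `m` with `p ∤ y` and those of `p²m`, for `p ∣ m`. When
`3 ∤ v`, the number `11p²` has exactly two representations, against the oddness of its `b₂₁`. So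
for `p ∤ m` the number of representations of `p^(2j + 1) m` is `j + 1` times that of `pm`, which is
even for `j = 2k + 1`.
-/

open PowerSeries

/-! ### Fixed points of involutions -/

open Finset in
lemma natCast_ncard_eq_ncard_fixedPoints {α : Type*} {D : Set α} (hD : D.Finite) {σ : α → α}
    (hσ : Set.MapsTo σ D D) (hinv : ∀ a ∈ D, σ (σ a) = a) :
    (D.ncard : ZMod 2) = ({a ∈ D | σ a = a}.ncard : ZMod 2) := by
  classical
  lift D to Finset α using hD
  have hmoved : ∑ a ∈ D with σ a ≠ a, (1 : ZMod 2) = 0 := by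
    refine sum_involution (fun a _ => σ a) (fun _ _ => by decide) ?_ ?_ ?_
    · exact fun a ha _ => (mem_filter.1 ha).2
    · intro a ha
      rw [mem_filter] at ha ⊢
      exact ⟨hσ ha.1, fun h => ha.2 (by rwa [hinv a ha.1, eq_comm] at h)⟩
    · exact fun a ha => hinv a (mem_filter.1 ha).1
  have hfixed : {a ∈ (D : Set α) | σ a = a} = (D.filter fun a => σ a = a : Finset α) := by
    ext a
    simp
  rw [hfixed, Set.ncard_coe_finset, Set.ncard_coe_finset,
    ← card_filter_add_card_filter_not (s := D) (fun a => σ a = a), Nat.cast_add, add_eq_left]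
  simpa using hmoved

lemma natCast_ncard_eq_zero {α : Type*} {D : Set α} (hD : D.Finite) {σ : α → α}
    (hσ : Set.MapsTo σ D D) (hinv : ∀ a ∈ D, σ (σ a) = a) (hfix : ∀ a ∈ D, σ a ≠ a) :
    (D.ncard : ZMod 2) = 0 := by
  have hempty : {a ∈ D | σ a = a} = ∅ := Set.eq_empty_of_forall_notMem fun a ha => hfix a ha.1 ha.2
  rw [natCast_ncard_eq_ncard_fixedPoints hD hσ hinv, hempty, Set.ncard_empty, Nat.cast_zero]

lemma ncard_sep_add_ncard_sep_not {α : Type*} {D : Set α} (hD : D.Finite) (P : α → Prop) :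
    {a ∈ D | P a}.ncard + {a ∈ D | ¬ P a}.ncard = D.ncard :=
  Set.ncard_inter_add_ncard_sdiff_eq_ncard D {a | P a} hD

/-! ### Power series -/

open Finset in
lemma coeff_mul_expand {R : Type*} [CommRing R] {k r : ℕ} (hr : r < k) (P F : R⟦X⟧) (n : ℕ) :
    coeff (k * n + r) (P * expand k (by lia) F) =
      coeff n ((PowerSeries.mk fun j => coeff (k * j + r) P) * F) := by
  have hk : 0 < k := by lia
  rw [coeff_mul, coeff_mul]
  symm
  refine sum_of_injOn (fun a => (k * a.1 + r, k * a.2)) ?_ ?_ ?_ ?_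
  · rintro ⟨a, b⟩ - ⟨c, d⟩ - h
    simpa [hk.ne'] using h
  · rintro ⟨a, b⟩ h
    simp only [mem_coe, HasAntidiagonal.mem_antidiagonal] at h ⊢
    rw [← h]
    ring
  · rintro ⟨a, b⟩ h h'
    rw [HasAntidiagonal.mem_antidiagonal] at h
    dsimp only at h ⊢
    rw [coeff_expand_of_not_dvd _ _ _, mul_zero]
    rintro ⟨c, rfl⟩
    have hc : c ≤ n := by
      by_contra! hc
      have := Nat.mul_le_mul_left k hc
      lia
    refine h' ⟨(n - c, c), ?_, ?_⟩
    · simp only [mem_coe, HasAntidiagonal.mem_antidiagonal]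
      lia
    · simp only [Prod.mk.injEq, and_true]
      zify [hc] at h ⊢
      linear_combination -h
  · rintro ⟨a, b⟩ -
    simp only [coeff_mk, coeff_expand_mul]

open PowerSeries.WithPiTopology in
lemma mk_card_restricted_not_dvd_mul_pentagonalSeries {R : Type*} [CommRing R] [NoZeroDivisors R]
    {k : ℕ} (hk : k ≠ 0) :
    (PowerSeries.mk fun n => ((Nat.Partition.restricted n (¬ k ∣ ·)).card : R)) *
      pentagonalSeries R = expand k hk (pentagonalSeries R) := by
  let _ : TopologicalSpace R := ⊥
  have _ : DiscreteTopology R := ⟨rfl⟩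
  rw [Nat.Partition.powerSeriesMk_card_restricted_eq_powerSeriesMk_card_countRestricted R
    (Nat.pos_of_ne_zero hk)]
  have hcont : Continuous (expand (R := R) k hk) := by
    refine continuous_iff_continuousAt.2 fun f => ?_
    rw [ContinuousAt, tendsto_iff_coeff_tendsto]
    intro d
    simp_rw [coeff_expand]
    split_ifs
    · exact (continuous_coeff R (d / k)).tendsto f
    · exact tendsto_const_nhds
  have hfactor (i : ℕ) : (∑ j ∈ Finset.range k, X ^ ((i + 1) * j)) * (1 - X ^ (i + 1)) =
      expand k hk (1 - X ^ (i + 1) : R⟦X⟧) := by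
    simp only [pow_mul, geom_sum_mul_neg, map_sub, map_one, map_pow, expand_X]
    rw [← pow_mul, ← pow_mul, mul_comm]
  have hprod := (Nat.Partition.hasProd_powerSeriesMk_card_countRestricted R
    (Nat.pos_of_ne_zero hk)).mul (hasProd_one_sub_X_pow R)
  simp only [hfactor] at hprod
  exact hprod.unique ((hasProd_one_sub_X_pow R).map (expand k hk) hcont)

lemma expand_eq_pow (p : ℕ) [Fact p.Prime] (hp : p ≠ 0) (f : (ZMod p)⟦X⟧) :
    expand p hp f = f ^ p := by
  have h := MvPowerSeries.map_frobenius_expand p hp (f := f)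
  rwa [ZMod.frobenius_zmod, MvPowerSeries.map_id] at h

/-! ### Theta series modulo 2 -/

/-- The reduction modulo 2 of the theta-like series `∑ Xⁿ` over the `n` for which `a * n + 1` is a
square; `a = 24` gives Euler's product `∏ (1 - Xⁱ)` and `a = 8` its cube. -/
noncomputable def squareSeries (a : ℕ) : (ZMod 2)⟦X⟧ :=
  PowerSeries.mk fun n => if IsSquare (a * n + 1) then 1 else 0

lemma coeff_squareSeries (a n : ℕ) :
    coeff n (squareSeries a) = if IsSquare (a * n + 1) then 1 else 0 := by
  rw [squareSeries, coeff_mk]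

lemma squareSeries_ne_zero (a : ℕ) : squareSeries a ≠ 0 := fun h => by
  simpa [coeff_squareSeries] using congrArg (coeff 0) h

lemma mem_range_pentagonal_iff (n : ℕ) :
    n ∈ Set.range pentagonal ↔ IsSquare (24 * n + 1) := by
  have hsq (k : ℤ) : pentagonal k = n ↔ (6 * k - 1) ^ 2 = 24 * n + 1 := by
    have h := two_mul_natCast_pentagonal k
    zify
    constructor <;> intro <;> linarith
  constructor
  · rintro ⟨k, hk⟩
    refine ⟨(6 * k - 1).natAbs, ?_⟩
    zify
    rw [abs_mul_abs_self, ← pow_two, (hsq k).1 hk]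
  · rintro ⟨x, hx⟩
    have hx6 : x % 6 = 1 ∨ x % 6 = 5 := by
      have : x * x % 6 = 1 := by omega
      rw [Nat.mul_mod] at this
      have : x % 6 < 6 := Nat.mod_lt _ (by norm_num)
      interval_cases x % 6 <;> simp_all
    zify at hx
    rcases hx6 with h | h
    · obtain ⟨t, rfl⟩ : ∃ t, x = 6 * t + 1 := ⟨x / 6, by omega⟩
      exact ⟨-t, (hsq _).2 (by rw [hx]; push_cast; ring)⟩
    · obtain ⟨t, rfl⟩ : ∃ t, x = 6 * t + 5 := ⟨x / 6, by omega⟩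
      exact ⟨t + 1, (hsq _).2 (by rw [hx]; push_cast; ring)⟩

lemma pentagonalSeries_eq_squareSeries : pentagonalSeries (ZMod 2) = squareSeries 24 := by
  have eq_one_of_ne_zero : ∀ a : ZMod 2, a ≠ 0 → a = 1 := by decide
  ext n
  rw [coeff_squareSeries]
  split_ifs with h
  · refine eq_one_of_ne_zero _ fun h0 => ?_
    exact (coeff_pentagonalSeries_eq_zero_iff _).1 h0 ((mem_range_pentagonal_iff n).2 h)
  · exact (coeff_pentagonalSeries_eq_zero_iff _).2 (mt (mem_range_pentagonal_iff n).1 h)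

lemma mk_b21_mul_squareSeries :
    (PowerSeries.mk fun n => (b21 n : ZMod 2)) * squareSeries 24 =
      expand 21 (by norm_num) (squareSeries 24) := by
  rw [← pentagonalSeries_eq_squareSeries,
    ← mk_card_restricted_not_dvd_mul_pentagonalSeries (R := ZMod 2) (k := 21) (by norm_num)]
  rfl

/-- The pairs of squares `x ^ 2 = b * i + 1`, `y ^ 2 = a * j + 1` with `i + r * j = n`: they
contribute to the `n`-th coefficient of `squareSeries b * expand r _ (squareSeries a)`. -/
def squarePairs (b r a n : ℕ) : Set (ℕ × ℕ) :=
  {q | ∃ i j : ℕ, i + r * j = n ∧ q.1 ^ 2 = b * i + 1 ∧ q.2 ^ 2 = a * j + 1}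

open Finset in
lemma coeff_squareSeries_mul_expand {a b r : ℕ} (ha : a ≠ 0) (hb : b ≠ 0) (hr : r ≠ 0) (n : ℕ) :
    coeff n (squareSeries b * expand r hr (squareSeries a)) =
      ((squarePairs b r a n).ncard : ZMod 2) := by
  classical
  have hcoeff (ij : ℕ × ℕ) :
      coeff ij.1 (squareSeries b) * coeff ij.2 (expand r hr (squareSeries a)) =
        if IsSquare (b * ij.1 + 1) ∧ r ∣ ij.2 ∧ IsSquare (a * (ij.2 / r) + 1) then 1 else 0 := by
    rw [coeff_expand, coeff_squareSeries, coeff_squareSeries]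
    split_ifs <;> simp_all
  simp only [coeff_mul, hcoeff, sum_boole]
  rw [← Set.ncard_coe_finset]
  congr 1
  symm
  have hindex {c i x : ℕ} (hc : c ≠ 0) (hx : x ^ 2 = c * i + 1) : (x ^ 2 - 1) / c = i := by
    rw [hx, Nat.add_sub_cancel, Nat.mul_div_cancel_left _ (Nat.pos_of_ne_zero hc)]
  refine Set.BijOn.ncard_eq
    (f := fun q => ((q.1 ^ 2 - 1) / b, r * ((q.2 ^ 2 - 1) / a))) ⟨?_, ?_, ?_⟩
  · rintro ⟨x, y⟩ ⟨i, j, rfl, hx, hy⟩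
    simp only [hindex hb hx, hindex ha hy, coe_filter, HasAntidiagonal.mem_antidiagonal,
      Set.mem_ofPred_eq, dvd_mul_right, Nat.mul_div_cancel_left _ (Nat.pos_of_ne_zero hr), true_and]
    exact ⟨⟨x, by rw [← hx, pow_two]⟩, ⟨y, by rw [← hy, pow_two]⟩⟩
  · rintro ⟨x, y⟩ ⟨i, j, -, hx, hy⟩ ⟨x', y'⟩ ⟨i', j', -, hx', hy'⟩ h
    simp only [hindex hb hx, hindex ha hy, hindex hb hx', hindex ha hy', Prod.mk.injEq,
      mul_right_inj' hr] at h
    obtain ⟨rfl, rfl⟩ := h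
    exact Prod.ext (Nat.pow_left_injective two_ne_zero (hx.trans hx'.symm))
      (Nat.pow_left_injective two_ne_zero (hy.trans hy'.symm))
  · rintro ⟨i, _⟩ hij
    simp only [coe_filter, HasAntidiagonal.mem_antidiagonal, Set.mem_ofPred_eq] at hij
    obtain ⟨rfl, ⟨x, hx⟩, ⟨j, rfl⟩, ⟨y, hy⟩⟩ := hij
    rw [Nat.mul_div_cancel_left _ (Nat.pos_of_ne_zero hr), ← pow_two] at hy
    rw [← pow_two] at hx
    refine ⟨(x, y), ⟨i, j, rfl, hx.symm, hy.symm⟩, ?_⟩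
    simp only [hindex hb hx.symm, hindex ha hy.symm]

lemma ncard_squarePairs {α : Type*} {b r a n : ℕ} {D : Set α} (f : α → ℤ × ℤ)
    (hmaps : ∀ d ∈ D, ∃ i j : ℕ, i + r * j = n ∧ (f d).1 ^ 2 = b * i + 1 ∧ (f d).2 ^ 2 = a * j + 1)
    (hinj : ∀ d ∈ D, ∀ d' ∈ D, (f d).1 ^ 2 = (f d').1 ^ 2 → (f d).2 ^ 2 = (f d').2 ^ 2 → d = d')
    (hsurj : ∀ x y : ℤ, (∃ i j : ℕ, i + r * j = n ∧ x ^ 2 = b * i + 1 ∧ y ^ 2 = a * j + 1) →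
      ∃ d ∈ D, (f d).1 ^ 2 = x ^ 2 ∧ (f d).2 ^ 2 = y ^ 2) :
    (squarePairs b r a n).ncard = D.ncard := by
  symm
  refine Set.BijOn.ncard_eq (f := fun d => ((f d).1.natAbs, (f d).2.natAbs)) ⟨?_, ?_, ?_⟩
  · intro d hd
    obtain ⟨i, j, h, hx, hy⟩ := hmaps d hd
    refine ⟨i, j, h, ?_, ?_⟩ <;> zify <;> simpa
  · intro d hd d' hd' h
    simp only [Prod.mk.injEq, Int.natAbs_eq_iff_sq_eq] at h
    exact hinj d hd d' hd' h.1 h.2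
  · rintro ⟨x, y⟩ ⟨i, j, h, hx, hy⟩
    obtain ⟨d, hd, hdx, hdy⟩ := hsurj x y ⟨i, j, h, by exact_mod_cast hx, by exact_mod_cast hy⟩
    rw [← Int.natAbs_eq_iff_sq_eq, Int.natAbs_natCast] at hdx hdy
    exact ⟨d, hd, Prod.ext hdx hdy⟩

/-! ### Involutions on representations by binary forms -/

/-- The integral representations of `N` by the binary quadratic form `a x² + b y²`. -/
def formReps (a b N : ℤ) : Set (ℤ × ℤ) :=
  {q | a * q.1 ^ 2 + b * q.2 ^ 2 = N}

lemma formReps_finite {a b : ℤ} (ha : 0 < a) (hb : 0 < b) (N : ℤ) : (formReps a b N).Finite := by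
  refine (Set.finite_Icc (-N, -N) (N, N)).subset fun q hq => ?_
  have hq : a * q.1 ^ 2 + b * q.2 ^ 2 = N := hq
  have le_of_sq {x : ℤ} (hx : x ^ 2 ≤ N) : -N ≤ x ∧ x ≤ N :=
    abs_le.1 (Int.natCast_natAbs x ▸ (Int.natAbs_le_self_sq x).trans hx)
  have h1 := le_of_sq (x := q.1) (by nlinarith [sq_nonneg q.1, sq_nonneg q.2])
  have h2 := le_of_sq (x := q.2) (by nlinarith [sq_nonneg q.1, sq_nonneg q.2])
  exact ⟨⟨h1.1, h2.1⟩, ⟨h1.2, h2.2⟩⟩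

lemma sq_emod_eight {x : ℤ} (h : x % 2 = 1) : x ^ 2 % 8 = 1 := by
  rcases (by omega : x % 8 = 1 ∨ x % 8 = 3 ∨ x % 8 = 5 ∨ x % 8 = 7) with h | h | h | h <;>
    simp [pow_two, Int.mul_emod, h]

lemma sq_emod_three {x : ℤ} (h : ¬ 3 ∣ x) : x ^ 2 % 3 = 1 := by
  rcases (by omega : x % 3 = 1 ∨ x % 3 = 2) with h | h <;> simp [pow_two, Int.mul_emod, h]

lemma emod_two_eq_one_of_sq {x : ℤ} (h : x ^ 2 % 2 = 1) : x % 2 = 1 := by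
  rw [← Int.odd_iff] at h ⊢
  exact (Int.odd_pow' two_ne_zero).1 h

lemma not_three_dvd_of_sq {x : ℤ} (h : x ^ 2 % 3 = 1) : ¬ 3 ∣ x := by
  intro hx
  have := dvd_pow hx two_ne_zero
  omega

lemma exists_sq_eq_emod_four_eq_one {x : ℤ} (hx : x % 2 = 1) :
    ∃ x', x' ^ 2 = x ^ 2 ∧ x' % 4 = 1 := by
  rcases (by omega : x % 4 = 1 ∨ -x % 4 = 1) with h | h
  exacts [⟨x, rfl, h⟩, ⟨-x, neg_sq x, h⟩]

lemma exists_sq_eq_three_dvd_sub {x y : ℤ} (hx : ¬ 3 ∣ x) (hy : ¬ 3 ∣ y) :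
    ∃ y', y' ^ 2 = y ^ 2 ∧ 3 ∣ x - y' := by
  have h : 3 ∣ x - y ∨ 3 ∣ x - -y := by
    rcases (by omega : x % 3 = 1 ∨ x % 3 = 2) with h | h <;> omega
  rcases h with h | h
  exacts [⟨y, rfl, h⟩, ⟨-y, neg_sq y, h⟩]

lemma isSquare_iff_exists_int_sq {n : ℕ} : IsSquare n ↔ ∃ x : ℤ, x ^ 2 = n := by
  rw [← Int.isSquare_natCast_iff, isSquare_iff_exists_sq]
  simp only [eq_comm]

lemma isSquare_iff_exists_emod_four_eq_one {n : ℕ} (hn : Odd n) :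
    IsSquare n ↔ ∃ x : ℤ, x ^ 2 = n ∧ x % 4 = 1 := by
  rw [isSquare_iff_exists_int_sq]
  refine ⟨fun ⟨x, hx⟩ => ?_, fun ⟨x, hx, _⟩ => ⟨x, hx⟩⟩
  have hodd : x % 2 = 1 := emod_two_eq_one_of_sq (by have := Nat.odd_iff.1 hn; omega)
  obtain ⟨x', hx', hx4⟩ := exists_sq_eq_emod_four_eq_one hodd
  exact ⟨x', hx'.trans hx, hx4⟩

lemma natCast_ncard_eq_ite {α : Type*} {D : Set α} (hD : D.Finite) {σ : α → α}
    (hσ : Set.MapsTo σ D D) (hinv : ∀ a ∈ D, σ (σ a) = a) {N m : ℤ} (hm : 2 < m) (g : ℤ → α)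
    (hfix : ∀ a, a ∈ D ∧ σ a = a ↔ ∃ x, a = g x ∧ x ^ 2 = N ∧ x % m = 1)
    {P : Prop} [Decidable P] (hP : P ↔ ∃ x : ℤ, x ^ 2 = N ∧ x % m = 1) :
    (D.ncard : ZMod 2) = if P then 1 else 0 := by
  rw [natCast_ncard_eq_ncard_fixedPoints hD hσ hinv]
  split_ifs with h
  · obtain ⟨x, hx, hxm⟩ := hP.1 h
    have hfixed : {a ∈ D | σ a = a} = {g x} := by
      refine Set.ext fun a => (hfix a).trans ⟨?_, fun ha => ⟨x, ha, hx, hxm⟩⟩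
      rintro ⟨y, rfl, hy, hym⟩
      rcases sq_eq_sq_iff_eq_or_eq_neg.1 (hy.trans hx.symm) with rfl | rfl
      · rfl
      · have hadd := Int.add_emod (-x) x m
        rw [neg_add_cancel, hxm, hym, Int.zero_emod, one_add_one_eq_two,
          Int.emod_eq_of_lt two_pos.le hm] at hadd
        norm_num at hadd
    rw [hfixed, Set.ncard_singleton, Nat.cast_one]
  · have hempty : {a ∈ D | σ a = a} = ∅ := Set.eq_empty_of_forall_notMem fun a ha => by
      obtain ⟨x, -, hx⟩ := (hfix a).1 ha
      exact h (hP.2 ⟨x, hx⟩)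
    rw [hempty, Set.ncard_empty, Nat.cast_zero]

/-- Representations of `N` by `x² + b y²` with `3 ∣ x - y`, one from each pair `±(x, y)` with
`x` odd. -/
def normReps (b N : ℤ) : Set (ℤ × ℤ) :=
  {q ∈ formReps 1 b N | q.1 % 4 = 1 ∧ 3 ∣ q.1 - q.2}

lemma normReps_finite {b : ℤ} (hb : 0 < b) (N : ℤ) : (normReps b N).Finite :=
  (formReps_finite one_pos hb N).subset (Set.sep_subset _ _)

lemma mk_mem_normReps {b N x y : ℤ} :
    (x, y) ∈ normReps b N ↔ x ^ 2 + b * y ^ 2 = N ∧ x % 4 = 1 ∧ 3 ∣ x - y := by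
  simp [normReps, formReps]

lemma ncard_squarePairs_eq_ncard_normReps {b N : ℤ} {r a n : ℕ}
    (h : ∀ x y : ℤ, (∃ i j : ℕ, i + r * j = n ∧ x ^ 2 = 24 * i + 1 ∧ y ^ 2 = a * j + 1) ↔
      x ^ 2 + b * y ^ 2 = N ∧ x % 2 = 1 ∧ ¬ 3 ∣ x ∧ ¬ 3 ∣ y) :
    (squarePairs 24 r a n).ncard = {q ∈ normReps b N | ¬ 3 ∣ q.1}.ncard := by
  refine ncard_squarePairs id ?_ ?_ ?_
  · rintro ⟨x, y⟩ ⟨hq, h3⟩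
    obtain ⟨hN, hx, hxy⟩ := mk_mem_normReps.1 hq
    dsimp only at h3
    exact (h x y).2 ⟨hN, by omega, h3, by omega⟩
  · rintro ⟨x, y⟩ ⟨hq, h3⟩ ⟨x', y'⟩ ⟨hq', -⟩ hx hy
    rw [mk_mem_normReps] at hq hq'
    simp only [id_eq, sq_eq_sq_iff_eq_or_eq_neg, Prod.mk.injEq] at *
    omega
  · intro x y hxy
    obtain ⟨hN, hx, hx3, hy3⟩ := (h x y).1 (by exact_mod_cast hxy)
    obtain ⟨x', hx', hx4⟩ := exists_sq_eq_emod_four_eq_one hx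
    have hx3' : ¬ 3 ∣ x' := by
      rcases sq_eq_sq_iff_eq_or_eq_neg.1 hx' with rfl | rfl <;> omega
    obtain ⟨y', hy', hxy'⟩ := exists_sq_eq_three_dvd_sub hx3' hy3
    exact ⟨(x', y'), ⟨mk_mem_normReps.2 ⟨by rw [hx', hy', hN], hx4, hxy'⟩, hx3'⟩, hx', hy'⟩

lemma mk_sub_mem_normReps_two {n x c : ℤ} :
    (x, x - 3 * c) ∈ normReps 2 (24 * n + 3) ↔
      x ^ 2 - 4 * x * c + 6 * c ^ 2 = 8 * n + 1 ∧ x % 4 = 1 := by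
  rw [mk_mem_normReps]
  constructor
  · rintro ⟨h, hx, -⟩
    exact ⟨by linarith only [h], hx⟩
  · rintro ⟨h, hx⟩
    exact ⟨by linarith only [h], hx, by simp⟩

lemma natCast_ncard_normReps_two (n : ℕ) :
    ((normReps 2 (24 * n + 3)).ncard : ZMod 2) = if IsSquare (8 * n + 1) then 1 else 0 := by
  have hparam {q : ℤ × ℤ} (hq : q ∈ normReps 2 (24 * n + 3)) :
      ∃ x c : ℤ, q = (x, x - 3 * c) := by
    obtain ⟨-, -, c, hc⟩ := hq
    exact ⟨q.1, c, Prod.ext rfl (by linarith)⟩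
  -- Write `x + y√-2 = (1 + √-2) * w` and conjugate `w`.
  let σ (q : ℤ × ℤ) : ℤ × ℤ := ((4 * q.2 - q.1) / 3, (2 * q.1 + q.2) / 3)
  have hσ (x c : ℤ) : σ (x, x - 3 * c) = (x - 4 * c, (x - 4 * c) - 3 * -c) := by
    ext <;> dsimp only [σ] <;> omega
  have hfix (q : ℤ × ℤ) : q ∈ normReps 2 (24 * n + 3) ∧ σ q = q ↔
      ∃ x, q = (x, x) ∧ x ^ 2 = 8 * n + 1 ∧ x % 4 = 1 := by
    constructor
    · rintro ⟨hq, hfq⟩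
      obtain ⟨x, c, rfl⟩ := hparam hq
      rw [hσ, Prod.mk.injEq] at hfq
      obtain rfl : c = 0 := by omega
      rw [mk_sub_mem_normReps_two] at hq
      exact ⟨x, by simp, by linarith, hq.2⟩
    · rintro ⟨x, rfl, hx, hx4⟩
      have hx0 : (x, x) = (x, x - 3 * 0) := by simp
      rw [hx0, mk_sub_mem_normReps_two, hσ]
      exact ⟨⟨by linarith, hx4⟩, by simp⟩
  refine natCast_ncard_eq_ite (σ := σ) (normReps_finite two_pos _) ?_ ?_ (by norm_num)
    (fun x => (x, x)) hfix ?_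
  · intro q hq
    obtain ⟨x, c, rfl⟩ := hparam hq
    rw [hσ]
    rw [mk_sub_mem_normReps_two] at hq ⊢
    exact ⟨by linarith, by omega⟩
  · intro q hq
    obtain ⟨x, c, rfl⟩ := hparam hq
    rw [hσ, hσ]
    ring_nf
  · exact_mod_cast isSquare_iff_exists_emod_four_eq_one (odd_iff_exists_bit1.2 ⟨4 * n, by ring⟩)

lemma natCast_ncard_normReps_two_three_dvd (n : ℕ) :
    ({q ∈ normReps 2 (24 * n + 3) | 3 ∣ q.1}.ncard : ZMod 2) = 0 := by
  refine natCast_ncard_eq_zero (σ := fun q => (q.1, -q.2))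
    ((normReps_finite two_pos _).subset (Set.sep_subset _ _)) ?_ (by simp) ?_
  · rintro ⟨x, y⟩ ⟨hq, h3⟩
    rw [mk_mem_normReps] at hq
    dsimp only at h3
    exact ⟨mk_mem_normReps.2 ⟨by rw [neg_sq, hq.1], hq.2.1, by omega⟩, h3⟩
  · rintro ⟨x, y⟩ ⟨hq, -⟩ hfix
    rw [mk_mem_normReps] at hq
    obtain rfl : y = 0 := by
      rw [Prod.mk.injEq] at hfix
      omega
    have := sq_emod_eight (x := x) (by omega)
    omega

lemma squareSeries_mul_expand_two :
    squareSeries 24 * expand 2 two_ne_zero (squareSeries 24) = squareSeries 8 := by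
  ext n
  rw [coeff_squareSeries_mul_expand (by norm_num) (by norm_num), coeff_squareSeries,
    ← natCast_ncard_normReps_two,
    ← ncard_sep_add_ncard_sep_not (normReps_finite two_pos _) fun q => 3 ∣ q.1, Nat.cast_add,
    natCast_ncard_normReps_two_three_dvd, zero_add, ncard_squarePairs_eq_ncard_normReps]
  intro x y
  constructor
  · rintro ⟨i, j, hij, hx, hy⟩
    exact ⟨by omega, emod_two_eq_one_of_sq (by omega), not_three_dvd_of_sq (by omega),
      not_three_dvd_of_sq (by omega)⟩
  · rintro ⟨h, hx, hx3, hy3⟩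
    have hy : y % 2 = 1 := emod_two_eq_one_of_sq (by have := sq_emod_eight hx; omega)
    have := sq_emod_eight hx
    have := sq_emod_eight hy
    have := sq_emod_three hx3
    have := sq_emod_three hy3
    have := sq_nonneg x
    have := sq_nonneg y
    exact ⟨(x ^ 2 / 24).toNat, (y ^ 2 / 24).toNat, by omega, by omega, by omega⟩

lemma squareSeries_pow_three : squareSeries 24 ^ 3 = squareSeries 8 := by
  rw [← squareSeries_mul_expand_two, expand_eq_pow]
  ring

lemma natCast_ncard_normReps_eight (n : ℕ) : ((normReps 8 (24 * n + 9)).ncard : ZMod 2) = 0 := by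
  -- For `x = y + 3 * c` the equation is `3y² + 2yc + 3c² = 8n + 3`, and `σ` is `(y, c) ↦ (-c, -y)`.
  let σ (q : ℤ × ℤ) : ℤ × ℤ := (-(q.1 + 8 * q.2) / 3, (q.2 - q.1) / 3)
  have hσ (y c : ℤ) : σ (y + 3 * c, y) = (-3 * y - c, -c) := by
    ext <;> dsimp only [σ] <;> omega
  have hparam {q : ℤ × ℤ} (hq : q ∈ normReps 8 (24 * n + 9)) : ∃ y c : ℤ, q = (y + 3 * c, y) := by
    obtain ⟨-, -, c, hc⟩ := hq
    exact ⟨q.2, c, Prod.ext (by linarith) rfl⟩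
  refine natCast_ncard_eq_zero (σ := σ) (normReps_finite (by norm_num) _) ?_ ?_ ?_
  · intro q hq
    obtain ⟨y, c, rfl⟩ := hparam hq
    rw [hσ, mk_mem_normReps] at *
    exact ⟨by linarith, by omega, by omega⟩
  · intro q hq
    obtain ⟨y, c, rfl⟩ := hparam hq
    have hc : (-3 * y - c, -c) = (-c + 3 * -y, -c) := by ring_nf
    rw [hσ, hc, hσ]
    ring_nf
  · intro q hq hfix
    obtain ⟨y, c, rfl⟩ := hparam hq
    rw [hσ, Prod.mk.injEq] at hfix
    rw [mk_mem_normReps] at hq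
    omega

lemma natCast_ncard_normReps_eight_three_dvd (n : ℕ) :
    ({q ∈ normReps 8 (24 * n + 9) | 3 ∣ q.1}.ncard : ZMod 2) =
      if IsSquare (24 * n + 9) then 1 else 0 := by
  have hfix (q : ℤ × ℤ) : q ∈ {q ∈ normReps 8 (24 * n + 9) | 3 ∣ q.1} ∧ (q.1, -q.2) = q ↔
      ∃ x, q = (x, 0) ∧ x ^ 2 = 24 * n + 9 ∧ x % 4 = 1 := by
    obtain ⟨x, y⟩ := q
    constructor
    · rintro ⟨⟨hq, h3⟩, hfq⟩
      rw [mk_mem_normReps] at hq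
      obtain rfl : y = 0 := by
        rw [Prod.mk.injEq] at hfq
        omega
      exact ⟨x, rfl, by linarith, hq.2.1⟩
    · rintro ⟨x', hx', hx, hx4⟩
      obtain ⟨rfl, rfl⟩ := Prod.mk.inj hx'
      have h3 : 3 ∣ x := Int.prime_three.dvd_of_dvd_pow (n := 2) (by omega)
      exact ⟨⟨mk_mem_normReps.2 ⟨by linarith, hx4, by simpa using h3⟩, h3⟩, by simp⟩
  refine natCast_ncard_eq_ite (σ := fun q => (q.1, -q.2))
    ((normReps_finite (by norm_num) _).subset (Set.sep_subset _ _)) ?_ (by simp) (by norm_num)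
    (fun x => (x, 0)) hfix ?_
  · rintro ⟨x, y⟩ ⟨hq, h3⟩
    rw [mk_mem_normReps] at hq
    dsimp only at h3
    exact ⟨mk_mem_normReps.2 ⟨by rw [neg_sq, hq.1], hq.2.1, by omega⟩, h3⟩
  · exact_mod_cast isSquare_iff_exists_emod_four_eq_one
      (odd_iff_exists_bit1.2 ⟨12 * n + 4, by ring⟩)

lemma isSquare_twentyFour_mul_add_nine_iff (n : ℕ) :
    IsSquare (24 * n + 9) ↔ 3 ∣ n ∧ IsSquare (8 * (n / 3) + 1) := by
  constructor
  · rintro ⟨x, hx⟩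
    obtain ⟨y, rfl⟩ : 3 ∣ x := Nat.prime_three.dvd_of_dvd_pow (n := 2) (by rw [pow_two]; omega)
    have hxy : 3 * y * (3 * y) = 9 * (y * y) := by ring
    exact ⟨by omega, y, by omega⟩
  · rintro ⟨⟨k, rfl⟩, y, hy⟩
    rw [Nat.mul_div_cancel_left _ three_pos] at hy
    have hxy : 3 * y * (3 * y) = 9 * (y * y) := by ring
    exact ⟨3 * y, by omega⟩

lemma squareSeries_twentyFour_mul_three :
    squareSeries 24 * squareSeries 3 = expand 3 three_ne_zero (squareSeries 8) := by
  ext n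
  have hsplit := congrArg (Nat.cast : ℕ → ZMod 2)
    (ncard_sep_add_ncard_sep_not (normReps_finite (b := 8) (by norm_num) (24 * n + 9)) (3 ∣ ·.1))
  rw [Nat.cast_add, natCast_ncard_normReps_eight, natCast_ncard_normReps_eight_three_dvd,
    CharTwo.add_eq_zero] at hsplit
  rw [← expand_one_apply (squareSeries 3),
    coeff_squareSeries_mul_expand (by norm_num) (by norm_num),
    ncard_squarePairs_eq_ncard_normReps, ← hsplit, coeff_expand, coeff_squareSeries, ← ite_and]
  · simp only [isSquare_twentyFour_mul_add_nine_iff]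
  intro x y
  constructor
  · rintro ⟨i, j, hij, hx, hy⟩
    exact ⟨by omega, emod_two_eq_one_of_sq (by omega), not_three_dvd_of_sq (by omega),
      not_three_dvd_of_sq (by omega)⟩
  · rintro ⟨h, hx, hx3, hy3⟩
    have := sq_emod_eight hx
    have := sq_emod_three hx3
    have := sq_emod_three hy3
    have := sq_nonneg x
    have := sq_nonneg y
    exact ⟨(x ^ 2 / 24).toNat, (y ^ 2 / 3).toNat, by omega, by omega, by omega⟩

lemma exists_sq_eq_two_pow_dvd_sub {k : ℕ} {x y : ℤ} (hx : x % 2 = 1) (hy : y % 2 = 1)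
    (h : 2 ^ (k + 1) ∣ y ^ 2 - x ^ 2) : ∃ y', y' ^ 2 = y ^ 2 ∧ 2 ^ k ∣ y' - x := by
  obtain ⟨y', hy', h4⟩ : ∃ y', y' ^ 2 = y ^ 2 ∧ (y' + x) % 4 = 2 := by
    rcases (by omega : (y + x) % 4 = 2 ∨ (-y + x) % 4 = 2) with h | h
    exacts [⟨y, rfl, h⟩, ⟨-y, neg_sq y, h⟩]
  obtain ⟨d, hd⟩ : 2 ∣ y' + x := by omega
  have hdvd : (2 : ℤ) ^ k ∣ (y' - x) * d := by
    have hfactor : y ^ 2 - x ^ 2 = (y' - x) * d * 2 := by linear_combination (y' - x) * hd - hy'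
    rwa [hfactor, pow_succ, mul_dvd_mul_iff_right two_ne_zero] at h
  refine ⟨y', hy', IsCoprime.dvd_of_dvd_mul_right ?_ hdvd⟩
  exact .pow_left (Int.prime_two.coprime_iff_not_dvd.2 (by omega))

lemma natCast_ncard_formReps_one_seven (n : ℕ) :
    ({q ∈ formReps 1 7 (2 * n + 1) | q.1 % 3 = 1}.ncard : ZMod 2) =
      if 12 ∣ n ∧ IsSquare (24 * (n / 12) + 1) then 1 else 0 := by
  refine natCast_ncard_eq_ite (σ := fun q => (q.1, -q.2)) (N := 2 * n + 1) (m := 3)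
    ((formReps_finite one_pos (by norm_num) _).subset (Set.sep_subset _ _)) ?_ (by simp)
    (by norm_num) (fun t => (t, 0)) ?_ ⟨?_, ?_⟩
  · rintro ⟨t, c⟩ ⟨h, ht⟩
    exact ⟨by simpa [formReps] using h, ht⟩
  · rintro ⟨t, c⟩
    simp only [formReps, Set.mem_ofPred_eq, Prod.mk.injEq, true_and]
    constructor
    · rintro ⟨⟨h, ht⟩, hc⟩
      obtain rfl : c = 0 := by omega
      exact ⟨t, ⟨rfl, rfl⟩, by linarith, ht⟩
    · rintro ⟨t, ⟨rfl, rfl⟩, h, ht⟩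
      exact ⟨⟨by linarith, ht⟩, neg_zero⟩
  · rintro ⟨⟨k, rfl⟩, hk⟩
    rw [Nat.mul_div_cancel_left _ (by norm_num), isSquare_iff_exists_int_sq] at hk
    obtain ⟨x, hx⟩ := hk
    obtain ⟨t, ht, ht3⟩ := exists_sq_eq_three_dvd_sub (x := 1) (by norm_num)
      (not_three_dvd_of_sq (x := x) (by omega))
    exact ⟨t, by omega, by omega⟩
  · rintro ⟨t, h, ht⟩
    have := sq_emod_three (x := t) (by omega)
    have := sq_emod_eight (emod_two_eq_one_of_sq (x := t) (by omega))
    exact ⟨by omega, isSquare_iff_exists_int_sq.2 ⟨t, by omega⟩⟩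

lemma add_emod_two_eq_one_of_mem_formReps_one_seven {n t c : ℤ}
    (h : (t, c) ∈ formReps 1 7 (2 * n + 1)) : (t + c) % 2 = 1 := by
  change 1 * t ^ 2 + 7 * c ^ 2 = 2 * n + 1 at h
  have hsq : (t + c) ^ 2 = 2 * (n + t * c - 3 * c ^ 2) + 1 := by linear_combination h
  exact emod_two_eq_one_of_sq (by omega)

lemma ncard_squarePairs_eq_ncard_formReps_one_seven (n : ℕ) :
    (squarePairs 8 21 24 (4 * n + 1)).ncard =
      {q ∈ formReps 1 7 (2 * n + 1) | q.1 % 3 = 1}.ncard := by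
  -- `w + x√-7` with `w ≡ 3x` mod 16 is `t - c√-7` times `3 + √-7`, an element of norm 16.
  refine ncard_squarePairs (fun q => (3 * q.1 + 7 * q.2, q.1 - 3 * q.2)) ?_ ?_ ?_
  · rintro ⟨t, c⟩ ⟨h, ht⟩
    have := add_emod_two_eq_one_of_mem_formReps_one_seven h
    change 1 * t ^ 2 + 7 * c ^ 2 = 2 * n + 1 at h
    dsimp only at ht ⊢
    have hwx : (3 * t + 7 * c) ^ 2 + 7 * (t - 3 * c) ^ 2 = 32 * n + 16 := by
      linear_combination 16 * h
    have := sq_emod_eight (x := 3 * t + 7 * c) (by omega)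
    have := sq_emod_eight (x := t - 3 * c) (by omega)
    have := sq_emod_three (x := t - 3 * c) (by omega)
    have := sq_nonneg (3 * t + 7 * c)
    have := sq_nonneg (t - 3 * c)
    exact ⟨((3 * t + 7 * c) ^ 2 / 8).toNat, ((t - 3 * c) ^ 2 / 24).toNat,
      by omega, by omega, by omega⟩
  · rintro ⟨t, c⟩ ⟨h, ht⟩ ⟨t', c'⟩ ⟨h', ht'⟩ hw hx
    have := add_emod_two_eq_one_of_mem_formReps_one_seven h
    have := add_emod_two_eq_one_of_mem_formReps_one_seven h'
    simp only [sq_eq_sq_iff_eq_or_eq_neg, Prod.mk.injEq] at *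
    omega
  · rintro w x ⟨i, j, hij, hw, hx⟩
    obtain ⟨x', hx', hx3⟩ := exists_sq_eq_three_dvd_sub (x := 1) (by norm_num)
      (not_three_dvd_of_sq (x := x) (by omega))
    have hxodd : x' % 2 = 1 := emod_two_eq_one_of_sq (by omega)
    obtain ⟨w', hw', c, hc⟩ := exists_sq_eq_two_pow_dvd_sub (k := 4) (x := 3 * x') (y := w)
      (by omega) (emod_two_eq_one_of_sq (by omega)) (by rw [mul_pow]; omega)
    obtain rfl : w' = 3 * x' + 16 * c := by linarith
    refine ⟨(x' + 3 * c, c), ⟨?_, by dsimp only; omega⟩, ?_, ?_⟩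
    · change 1 * (x' + 3 * c) ^ 2 + 7 * c ^ 2 = 2 * n + 1
      have : (3 * x' + 16 * c) ^ 2 + 7 * x' ^ 2 = 32 * n + 16 := by omega
      linarith
    · rw [← hw']
      ring
    · rw [← hx']
      ring

lemma coeff_squareSeries_eight_mul_expand (n : ℕ) :
    coeff (4 * n + 1) (squareSeries 8 * expand 21 (by norm_num) (squareSeries 24)) =
      coeff n (expand 12 (by norm_num) (squareSeries 24)) := by
  rw [coeff_squareSeries_mul_expand (by norm_num) (by norm_num),
    ncard_squarePairs_eq_ncard_formReps_one_seven, natCast_ncard_formReps_one_seven, coeff_expand,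
    coeff_squareSeries, ← ite_and]

/-! ### The parity of `b21` on the progression `4n + 1` -/

lemma mk_b21_four_mul_add_one :
    (PowerSeries.mk fun n => (b21 (4 * n + 1) : ZMod 2)) =
      squareSeries 3 * expand 3 three_ne_zero (squareSeries 24) := by
  have expand_four : expand 4 four_ne_zero (squareSeries 24) = squareSeries 24 ^ 4 := by
    have hpow : squareSeries 24 ^ 4 = (squareSeries 24 ^ 2) ^ 2 := by ring
    rw [hpow, ← expand_eq_pow 2 two_ne_zero, ← expand_eq_pow 2 two_ne_zero,
      ← expand_mul 2 two_ne_zero 2 two_ne_zero]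
  have hmul : (PowerSeries.mk fun n => (b21 (4 * n + 1) : ZMod 2)) * squareSeries 24 =
      expand 12 (by norm_num) (squareSeries 24) := by
    ext n
    have hdissect := coeff_mul_expand (k := 4) (r := 1) (by norm_num)
      (PowerSeries.mk fun n => (b21 n : ZMod 2)) (squareSeries 24) n
    simp only [coeff_mk] at hdissect
    rw [← hdissect, expand_four, ← coeff_squareSeries_eight_mul_expand, ← squareSeries_pow_three,
      ← mk_b21_mul_squareSeries]
    congr 1
    ring
  refine mul_right_cancel₀ (squareSeries_ne_zero 24) ?_
  calc (PowerSeries.mk fun n => (b21 (4 * n + 1) : ZMod 2)) * squareSeries 24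
      = expand 3 three_ne_zero (expand 4 four_ne_zero (squareSeries 24)) := by
        rw [hmul, ← expand_mul 3 three_ne_zero 4 four_ne_zero]
    _ = expand 3 three_ne_zero (squareSeries 8) * expand 3 three_ne_zero (squareSeries 24) := by
        rw [expand_four, pow_succ, squareSeries_pow_three, map_mul]
    _ = squareSeries 3 * expand 3 three_ne_zero (squareSeries 24) * squareSeries 24 := by
        rw [← squareSeries_twentyFour_mul_three]
        ring

/-- The representations of `m` by `3y² + 8z²` with `y, z ≥ 0` and `y` coprime to 3. -/
def coprimeReps (m : ℤ) : Set (ℤ × ℤ) :=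
  {q ∈ formReps 3 8 m | 0 ≤ q.1 ∧ 0 ≤ q.2 ∧ ¬ 3 ∣ q.1}

lemma mk_mem_coprimeReps {m y z : ℤ} :
    (y, z) ∈ coprimeReps m ↔ 3 * y ^ 2 + 8 * z ^ 2 = m ∧ 0 ≤ y ∧ 0 ≤ z ∧ ¬ 3 ∣ y :=
  Iff.rfl

lemma coprimeReps_finite (m : ℤ) : (coprimeReps m).Finite :=
  (formReps_finite (by norm_num) (by norm_num) m).subset (Set.sep_subset _ _)

lemma natCast_b21_four_mul_add_one (n : ℕ) :
    (b21 (4 * n + 1) : ZMod 2) = (coprimeReps (24 * n + 11)).ncard := by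
  have h := congrArg (coeff n) mk_b21_four_mul_add_one
  rw [coeff_mk, coeff_squareSeries_mul_expand (by norm_num) (by norm_num)] at h
  rw [h, ncard_squarePairs Prod.swap]
  · rintro ⟨y, z⟩ hq
    obtain ⟨h, -, -, h3⟩ := mk_mem_coprimeReps.1 hq
    have := sq_emod_three h3
    have := sq_emod_three (not_three_dvd_of_sq (x := z) (by omega))
    have := sq_emod_eight (emod_two_eq_one_of_sq (x := y) (by omega))
    have := sq_nonneg y
    have := sq_nonneg z
    dsimp only [Prod.fst_swap, Prod.snd_swap]
    exact ⟨(z ^ 2 / 3).toNat, (y ^ 2 / 24).toNat, by omega, by omega, by omega⟩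
  · rintro ⟨y, z⟩ ⟨-, hy, hz, -⟩ ⟨y', z'⟩ ⟨-, hy', hz', -⟩ hz2 hy2
    exact Prod.ext ((sq_eq_sq₀ hy hy').1 hy2) ((sq_eq_sq₀ hz hz').1 hz2)
  · rintro z y ⟨i, j, hij, hz, hy⟩
    have h3 : ¬ 3 ∣ |y| := not_three_dvd_of_sq (by rw [sq_abs]; omega)
    refine ⟨(|y|, |z|), mk_mem_coprimeReps.2 ⟨?_, abs_nonneg y, abs_nonneg z, h3⟩, ?_, ?_⟩
    · rw [sq_abs, sq_abs]
      omega
    · exact sq_abs z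
    · exact sq_abs y

/-! ### Representing the square of a prime by `u² + 24v²` -/

lemma exists_intCast_eq_mul {n A B : ℕ} [NeZero n] (h : n < (A + 1) * (B + 1)) (s : ZMod n) :
    ∃ a b : ℤ, |a| ≤ A ∧ |b| ≤ B ∧ (a ≠ 0 ∨ b ≠ 0) ∧ (a : ZMod n) = s * b := by
  have hcard : (Finset.univ : Finset (ZMod n)).card <
      (Finset.range (A + 1) ×ˢ Finset.range (B + 1)).card := by
    rwa [Finset.card_univ, ZMod.card, Finset.card_product, Finset.card_range, Finset.card_range]
  obtain ⟨⟨a, b⟩, hab, ⟨a', b'⟩, hab', hne, heq⟩ :=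
    Finset.exists_ne_map_eq_of_card_lt_of_maps_to hcard
      (f := fun q => (q.1 : ZMod n) - s * q.2) fun _ _ => Finset.mem_coe.2 (Finset.mem_univ _)
  simp only [Finset.mem_product, Finset.mem_range] at hab hab'
  refine ⟨a - a', b - b', abs_le.2 ⟨by omega, by omega⟩, abs_le.2 ⟨by omega, by omega⟩, ?_, ?_⟩
  · rw [Ne, Prod.mk.injEq] at hne
    omega
  · push_cast
    linear_combination heq

lemma exists_dvd_sq_add_six_mul_sq {n : ℕ} (hn : n ≠ 0) {s : ℤ} (hs : (n : ℤ) ∣ s ^ 2 + 6) :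
    ∃ a b : ℤ, (n : ℤ) ∣ a ^ 2 + 6 * b ^ 2 ∧ 0 < a ^ 2 + 6 * b ^ 2 ∧ a ^ 2 + 6 * b ^ 2 < 5 * n := by
  have : NeZero n := ⟨hn⟩
  set A := Nat.sqrt (5 * n / 2)
  set B := Nat.sqrt (2 * n / 5)
  have hA : 5 * n / 2 < (A + 1) ^ 2 := Nat.lt_succ_sqrt' _
  have hB : 2 * n / 5 < (B + 1) ^ 2 := Nat.lt_succ_sqrt' _
  have hA' : A ^ 2 ≤ 5 * n / 2 := Nat.sqrt_le' _
  have hB' : B ^ 2 ≤ 2 * n / 5 := Nat.sqrt_le' _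
  have hAB : n < (A + 1) * (B + 1) := by
    refine lt_of_pow_lt_pow_left₀ 2 (Nat.zero_le _) ?_
    have hA2 : 5 * n < 2 * (A + 1) ^ 2 := by omega
    have hB2 : 2 * n < 5 * (B + 1) ^ 2 := by omega
    nlinarith
  obtain ⟨a, b, ha, hb, hab, h⟩ := exists_intCast_eq_mul hAB s
  have ha2 : a ^ 2 ≤ A ^ 2 := sq_le_sq' (abs_le.1 ha).1 (abs_le.1 ha).2
  have hb2 : b ^ 2 ≤ B ^ 2 := sq_le_sq' (abs_le.1 hb).1 (abs_le.1 hb).2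
  refine ⟨a, b, ?_, ?_, ?_⟩
  · rw [← ZMod.intCast_zmod_eq_zero_iff_dvd] at hs ⊢
    push_cast at hs ⊢
    linear_combination (a + s * b) * h + b ^ 2 * hs
  · rcases hab with h | h <;> positivity
  · zify at hA' hB'
    omega

lemma exists_mul_sq_add_mul_sq_eq {n : ℕ} (hn : n ≠ 0) {s : ℤ} (hs : (n : ℤ) ∣ s ^ 2 + 6) :
    ∃ a b x y : ℤ, a * b = 6 ∧ a * x ^ 2 + b * y ^ 2 = n := by
  obtain ⟨x, y, ⟨c, hc⟩, hpos, hlt⟩ := exists_dvd_sq_add_six_mul_sq hn hs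
  have hc0 : 0 < c := by
    rw [hc] at hpos
    exact pos_of_mul_pos_right hpos (by positivity)
  have hc5 : c < 5 := by
    rw [hc, mul_comm] at hlt
    exact lt_of_mul_lt_mul_right hlt (by positivity)
  interval_cases c
  · exact ⟨1, 6, x, y, by norm_num, by linarith⟩
  · obtain ⟨e, rfl⟩ : 2 ∣ x := Int.prime_two.dvd_of_dvd_pow (n := 2) (by omega)
    exact ⟨2, 3, e, y, by norm_num, by linarith⟩
  · obtain ⟨e, rfl⟩ : 3 ∣ x := Int.prime_three.dvd_of_dvd_pow (n := 2) (by omega)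
    exact ⟨3, 2, e, y, by norm_num, by linarith⟩
  · obtain ⟨e, rfl⟩ : 2 ∣ x := Int.prime_two.dvd_of_dvd_pow (n := 2) (by omega)
    obtain ⟨f, rfl⟩ : 2 ∣ y :=
      Int.prime_two.dvd_of_dvd_pow (n := 2) (by rw [mul_pow] at hc; omega)
    exact ⟨1, 6, e, f, by norm_num, by linarith⟩

section Prime

variable {p : ℤ}

lemma dvd_of_dvd_mul_of_isCoprime {c d x : ℤ} (hc : IsCoprime p c) (hd : d ∣ c) (h : p ∣ d * x) :
    p ∣ x :=
  (hc.of_isCoprime_of_dvd_right hd).dvd_of_dvd_mul_left h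

lemma not_dvd_mul_of_mul_sq_add_mul_sq_eq (hp : Prime p) {a b x y : ℤ}
    (hab : IsCoprime p (a * b)) (h : a * x ^ 2 + b * y ^ 2 = p) : ¬ p ∣ x * y := by
  intro hxy
  have both : p ∣ x ∧ p ∣ y := by
    rcases hp.dvd_or_dvd hxy with hx | hy
    · have hby : p ∣ b * y ^ 2 :=
        (dvd_add_right (Dvd.dvd.mul_left (dvd_pow hx two_ne_zero) a)).1 (dvd_of_eq h.symm)
      exact ⟨hx, hp.dvd_of_dvd_pow (dvd_of_dvd_mul_of_isCoprime hab (dvd_mul_left b a) hby)⟩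
    · have hax : p ∣ a * x ^ 2 :=
        (dvd_add_left (Dvd.dvd.mul_left (dvd_pow hy two_ne_zero) b)).1 (dvd_of_eq h.symm)
      exact ⟨hp.dvd_of_dvd_pow (dvd_of_dvd_mul_of_isCoprime hab (dvd_mul_right a b) hax), hy⟩
  obtain ⟨⟨e, rfl⟩, f, rfl⟩ := both
  refine hp.not_isUnit (IsUnit.of_mul_eq_one (a * e ^ 2 + b * f ^ 2) ?_)
  exact mul_left_cancel₀ hp.ne_zero (by linear_combination h)

lemma exists_sq_add_twentyFour_mul_sq_eq (hp : Prime p) (hp0 : 0 < p) (hp24 : IsCoprime p 24)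
    {s : ℤ} (hs : p ∣ s ^ 2 + 6) : ∃ u v : ℤ, u ^ 2 + 24 * v ^ 2 = p ^ 2 ∧ ¬ p ∣ v := by
  lift p to ℕ using hp0.le
  obtain ⟨a, b, x, y, hab, h⟩ := exists_mul_sq_add_mul_sq_eq (by exact_mod_cast hp.ne_zero) hs
  refine ⟨a * x ^ 2 - b * y ^ 2, x * y, ?_, ?_⟩
  · rw [← h]
    linear_combination -4 * x ^ 2 * y ^ 2 * hab
  · refine not_dvd_mul_of_mul_sq_add_mul_sq_eq hp ?_ h
    exact hp24.of_isCoprime_of_dvd_right (by norm_num [hab])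

/-! ### Representations by `3y² + 8z²` at a prime -/

/-- The representations of `m` by `3y² + 8z²` with `y, z ≥ 0` and `y` coprime to `3p`. -/
def primitiveReps (p m : ℤ) : Set (ℤ × ℤ) :=
  {q ∈ coprimeReps m | ¬ p ∣ q.1}

lemma dvd_fst_iff_dvd_snd (hp : Prime p) (hp24 : IsCoprime p 24) {m y z : ℤ} (hm : p ∣ m)
    (h : 3 * y ^ 2 + 8 * z ^ 2 = m) : p ∣ y ↔ p ∣ z := by
  rw [← h] at hm
  refine ⟨fun hy => ?_, fun hz => ?_⟩
  · have hz : p ∣ 8 * z ^ 2 := (dvd_add_right (Dvd.dvd.mul_left (dvd_pow hy two_ne_zero) 3)).1 hm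
    exact hp.dvd_of_dvd_pow (dvd_of_dvd_mul_of_isCoprime hp24 (by norm_num) hz)
  · have hy : p ∣ 3 * y ^ 2 := (dvd_add_left (Dvd.dvd.mul_left (dvd_pow hz two_ne_zero) 8)).1 hm
    exact hp.dvd_of_dvd_pow (dvd_of_dvd_mul_of_isCoprime hp24 (by norm_num) hy)

lemma not_three_dvd_of_isCoprime (hp24 : IsCoprime p 24) : ¬ 3 ∣ p :=
  Int.prime_three.coprime_iff_not_dvd.1 (hp24.of_isCoprime_of_dvd_right (by norm_num)).symm

lemma ncard_sep_dvd_coprimeReps_sq_mul (hp : Prime p) (hp0 : 0 < p) (hp24 : IsCoprime p 24)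
    (m : ℤ) : {q ∈ coprimeReps (p ^ 2 * m) | p ∣ q.1}.ncard = (coprimeReps m).ncard := by
  have hp3 : ∀ y, 3 ∣ p * y ↔ 3 ∣ y := fun y => by
    rw [Int.prime_three.dvd_mul, or_iff_right (not_three_dvd_of_isCoprime hp24)]
  have hmem {y z : ℤ} : (p * y, p * z) ∈ coprimeReps (p ^ 2 * m) ↔ (y, z) ∈ coprimeReps m := by
    rw [mk_mem_coprimeReps, mk_mem_coprimeReps, mul_nonneg_iff_of_pos_left hp0,
      mul_nonneg_iff_of_pos_left hp0, hp3,
      ← mul_right_inj' (pow_ne_zero 2 hp0.ne') (c := m)]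
    ring_nf
  symm
  refine Set.BijOn.ncard_eq (f := fun q => (p * q.1, p * q.2)) ⟨?_, ?_, ?_⟩
  · exact fun q hq => ⟨hmem.2 hq, dvd_mul_right _ _⟩
  · rintro ⟨y, z⟩ - ⟨y', z'⟩ - h
    simpa [hp0.ne'] using h
  · rintro ⟨y, z⟩ ⟨hq, hy⟩
    have hpm : p ∣ p ^ 2 * m := Dvd.dvd.mul_right (dvd_pow_self p two_ne_zero) m
    obtain ⟨z, rfl⟩ := (dvd_fst_iff_dvd_snd hp hp24 hpm hq.1).1 hy
    obtain ⟨y, rfl⟩ := hy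
    exact ⟨(y, z), hmem.1 hq, rfl⟩

lemma ncard_coprimeReps_sq_mul (hp : Prime p) (hp0 : 0 < p) (hp24 : IsCoprime p 24) (m : ℤ) :
    (coprimeReps (p ^ 2 * m)).ncard =
      (coprimeReps m).ncard + (primitiveReps p (p ^ 2 * m)).ncard := by
  rw [← ncard_sep_dvd_coprimeReps_sq_mul hp hp0 hp24 m, ← ncard_sep_add_ncard_sep_not
    (coprimeReps_finite (p ^ 2 * m)) (p ∣ ·.1), primitiveReps]

lemma primitiveReps_eq_coprimeReps (hp : Prime p) (hp24 : IsCoprime p 24) {m : ℤ} (hm : p ∣ m)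
    (hm2 : ¬ p ^ 2 ∣ m) : primitiveReps p m = coprimeReps m := by
  refine Set.sep_eq_self_iff_mem_true.2 ?_
  rintro ⟨y, z⟩ ⟨h, -⟩ hy
  have hz := (dvd_fst_iff_dvd_snd hp hp24 hm h).1 hy
  refine hm2 (h ▸ dvd_add ?_ ?_)
  · exact Dvd.dvd.mul_left (pow_dvd_pow_of_dvd hy 2) 3
  · exact Dvd.dvd.mul_left (pow_dvd_pow_of_dvd hz 2) 8

lemma exists_dvd_sq_add_six (hp : Prime p) (hp24 : IsCoprime p 24) {m : ℤ} (hm : p ∣ m)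
    {q : ℤ × ℤ} (hq : q ∈ primitiveReps p m) : ∃ s : ℤ, p ∣ s ^ 2 + 6 := by
  obtain ⟨y, z⟩ := q
  obtain ⟨⟨h, -⟩, hy⟩ := hq
  have hz : IsCoprime p z :=
    hp.coprime_iff_not_dvd.2 (mt (dvd_fst_iff_dvd_snd hp hp24 hm h).2 hy)
  obtain ⟨a, b, hab⟩ := hz.mul_right (hp24.of_isCoprime_of_dvd_right (by norm_num : (2 : ℤ) ∣ 24))
  obtain ⟨k, hk⟩ := hm
  have hyz : 3 * y ^ 2 + 8 * z ^ 2 = p * k := h.trans hk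
  exact ⟨3 * y * b, 3 * b ^ 2 * k + 6 * a * (2 - a * p), by
    linear_combination 3 * b ^ 2 * hyz - 6 * (b * (z * 2) + (1 - a * p)) * hab⟩

/-- The representations of `m` by `3y² + 8z²` in which `y` is prime to `p`, the sign of `y` is
fixed modulo 3 and the sign of `z` is fixed by the prime above `p` dividing `y√3 + z√-8`, selected
by `(u, v)`. -/
def orientedReps (p u v m : ℤ) : Set (ℤ × ℤ) :=
  {q ∈ formReps 3 8 m | q.1 % 3 = 1 ∧ ¬ p ∣ q.1 ∧ p ∣ u * q.1 - 8 * v * q.2}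

section Rotation

variable {u v : ℤ}

lemma not_dvd_of_sq_add_twentyFour_mul_sq_eq (hp : Prime p) (hp24 : IsCoprime p 24)
    (huv : u ^ 2 + 24 * v ^ 2 = p ^ 2) (hv : ¬ p ∣ v) : ¬ p ∣ u := by
  intro hu
  have h : p ∣ 24 * v ^ 2 := (dvd_add_right (dvd_pow hu two_ne_zero)).1
    (huv ▸ dvd_pow_self p two_ne_zero)
  exact hv (hp.dvd_of_dvd_pow (hp24.dvd_of_dvd_mul_left h))

lemma dvd_sub_or_dvd_add (hp : Prime p) (huv : u ^ 2 + 24 * v ^ 2 = p ^ 2) {m y z : ℤ}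
    (hm : p ∣ m) (h : 3 * y ^ 2 + 8 * z ^ 2 = m) :
    p ∣ u * y - 8 * v * z ∨ p ∣ u * y + 8 * v * z := by
  obtain ⟨k, rfl⟩ := hm
  exact hp.dvd_or_dvd ⟨p * y ^ 2 - 8 * v ^ 2 * k, by linear_combination y ^ 2 * huv - 8 * v ^ 2 * h⟩

lemma not_dvd_add_of_dvd_sub (hp : Prime p) (hp24 : IsCoprime p 24)
    (huv : u ^ 2 + 24 * v ^ 2 = p ^ 2) (hv : ¬ p ∣ v) {y z : ℤ} (hy : ¬ p ∣ y)
    (h : p ∣ u * y - 8 * v * z) : ¬ p ∣ u * y + 8 * v * z := by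
  intro h'
  have hsum : u * y - 8 * v * z + (u * y + 8 * v * z) = 2 * (u * y) := by ring
  have huy : p ∣ 2 * (u * y) := hsum ▸ dvd_add h h'
  rcases hp.dvd_or_dvd (dvd_of_dvd_mul_of_isCoprime hp24 (by norm_num) huy) with hu | hy'
  · exact not_dvd_of_sq_add_twentyFour_mul_sq_eq hp hp24 huv hv hu
  · exact hy hy'

lemma ncard_orientedReps (hp : Prime p) (hp24 : IsCoprime p 24)
    (huv : u ^ 2 + 24 * v ^ 2 = p ^ 2) (hv : ¬ p ∣ v) {m : ℤ} (hm : p ∣ m) :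
    (orientedReps p u v m).ncard = (primitiveReps p m).ncard := by
  refine Set.BijOn.ncard_eq (f := fun q => (|q.1|, |q.2|)) ⟨?_, ?_, ?_⟩
  · rintro ⟨y, z⟩ ⟨h, hy3, hy, -⟩
    refine ⟨mk_mem_coprimeReps.2 ⟨?_, abs_nonneg y, abs_nonneg z, ?_⟩, by rwa [dvd_abs]⟩
    · rw [sq_abs, sq_abs]
      exact h
    · rw [dvd_abs]
      dsimp only at hy3
      omega
  · rintro ⟨y, z⟩ ⟨-, hy3, hy, hyz⟩ ⟨y', z'⟩ ⟨-, hy3', -, hyz'⟩ h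
    simp only [Prod.mk.injEq, abs_eq_abs] at *
    obtain rfl : y = y' := by omega
    rcases h.2 with rfl | rfl
    · exact ⟨rfl, rfl⟩
    · exact absurd (by simpa using hyz) (not_dvd_add_of_dvd_sub hp hp24 huv hv hy hyz')
  · rintro ⟨y, z⟩ ⟨⟨h, hy0, hz0, hy3⟩, hy⟩
    dsimp only at hy0 hz0 hy3 hy
    obtain ⟨y', hy', hy3'⟩ : ∃ y', |y'| = y ∧ y' % 3 = 1 := by
      rcases (by omega : y % 3 = 1 ∨ -y % 3 = 1) with hy1 | hy1
      exacts [⟨y, abs_of_nonneg hy0, hy1⟩, ⟨-y, by rw [abs_neg, abs_of_nonneg hy0], hy1⟩]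
    subst hy'
    rw [dvd_abs] at hy
    have h' : 3 * y' ^ 2 + 8 * z ^ 2 = m := by rw [← sq_abs]; exact h
    rcases dvd_sub_or_dvd_add hp huv hm h' with hdvd | hdvd
    · exact ⟨(y', z), ⟨h', hy3', hy, hdvd⟩, by simp [abs_of_nonneg hz0]⟩
    · refine ⟨(y', -z), ⟨?_, hy3', hy, ?_⟩, by simp [abs_of_nonneg hz0]⟩
      · simpa [formReps] using h'
      · simpa using hdvd

/-- Multiplication of `y√3 + z√-8` by `u - v√-24`; it scales `3y² + 8z²` by `u² + 24v²`. -/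
def rotate (u v : ℤ) (q : ℤ × ℤ) : ℤ × ℤ :=
  (u * q.1 + 8 * v * q.2, u * q.2 - 3 * v * q.1)

lemma rotate_mem_formReps {d m : ℤ} (huv : u ^ 2 + 24 * v ^ 2 = d) (hd : d ≠ 0) {q : ℤ × ℤ} :
    rotate u v q ∈ formReps 3 8 (d * m) ↔ q ∈ formReps 3 8 m := by
  simp only [formReps, rotate, Set.mem_ofPred_eq, ← mul_right_inj' hd (c := m), ← huv]
  ring_nf

lemma exists_rotate_eq (hp : Prime p) (hp24 : IsCoprime p 24)
    (huv : u ^ 2 + 24 * v ^ 2 = p ^ 2) (hv : ¬ p ∣ v) {m : ℤ} {q : ℤ × ℤ}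
    (hq : q ∈ orientedReps p u v (p ^ 2 * m)) : ∃ q', rotate u v q' = q := by
  obtain ⟨y, z⟩ := q
  obtain ⟨h, -, hy, hdvd⟩ := hq
  change 3 * y ^ 2 + 8 * z ^ 2 = p ^ 2 * m at h
  have hcop : IsCoprime (p ^ 2) (u * y + 8 * v * z) :=
    .pow_left (hp.coprime_iff_not_dvd.2 (not_dvd_add_of_dvd_sub hp hp24 huv hv hy hdvd))
  obtain ⟨e, he⟩ : p ^ 2 ∣ u * y - 8 * v * z := hcop.dvd_of_dvd_mul_right
    ⟨y ^ 2 - 8 * v ^ 2 * m, by linear_combination y ^ 2 * huv - 8 * v ^ 2 * h⟩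
  have hcop' : IsCoprime (p ^ 2) (8 * v) :=
    .pow_left (.mul_right (hp24.of_isCoprime_of_dvd_right (by norm_num))
      (hp.coprime_iff_not_dvd.2 hv))
  obtain ⟨f, hf⟩ : p ^ 2 ∣ u * z + 3 * v * y := hcop'.dvd_of_dvd_mul_left
    ⟨y - u * e, by linear_combination y * huv - u * he⟩
  have hp2 : p ^ 2 ≠ 0 := pow_ne_zero 2 hp.ne_zero
  refine ⟨(e, f), Prod.ext (mul_left_cancel₀ hp2 ?_) (mul_left_cancel₀ hp2 ?_)⟩
  · simp only [rotate]
    linear_combination y * huv - u * he - 8 * v * hf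
  · simp only [rotate]
    linear_combination z * huv + 3 * v * he - u * hf

lemma ncard_orientedReps_sq_mul (hp : Prime p) (hp24 : IsCoprime p 24)
    (huv : u ^ 2 + 24 * v ^ 2 = p ^ 2) (hv : ¬ p ∣ v) (m : ℤ) :
    (orientedReps p u v (p ^ 2 * m)).ncard =
      {q ∈ formReps 3 8 m | (rotate u v q).1 % 3 = 1 ∧ ¬ p ∣ (rotate u v q).1}.ncard := by
  have hp2 : p ^ 2 ≠ 0 := pow_ne_zero 2 hp.ne_zero
  symm
  refine Set.BijOn.ncard_eq (f := rotate u v) ⟨?_, ?_, ?_⟩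
  · rintro ⟨y, z⟩ ⟨h, h3, hndvd⟩
    refine ⟨(rotate_mem_formReps huv hp2).2 h, h3, hndvd, p * y, ?_⟩
    simp only [rotate]
    linear_combination y * huv
  · rintro ⟨y, z⟩ - ⟨y', z'⟩ - h
    simp only [rotate, Prod.mk.injEq] at h
    refine Prod.ext (mul_left_cancel₀ hp2 ?_) (mul_left_cancel₀ hp2 ?_)
    · linear_combination (y' - y) * huv + u * h.1 - 8 * v * h.2
    · linear_combination (z' - z) * huv + 3 * v * h.1 + u * h.2
  · intro q hq
    obtain ⟨q', rfl⟩ := exists_rotate_eq hp hp24 huv hv hq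
    exact ⟨q', ⟨(rotate_mem_formReps huv hp2).1 hq.1, hq.2.1, hq.2.2.1⟩, rfl⟩

lemma ncard_primitiveReps_sq_mul_of_emod_three_eq_one (hp : Prime p) (hp24 : IsCoprime p 24)
    (huv : u ^ 2 + 24 * v ^ 2 = p ^ 2) (hv : ¬ p ∣ v) (hu3 : u % 3 = 1) (hv3 : 3 ∣ v) {m : ℤ}
    (hm : p ∣ m) : (primitiveReps p (p ^ 2 * m)).ncard = (primitiveReps p m).ncard := by
  rw [← ncard_orientedReps hp hp24 huv hv (Dvd.dvd.mul_left hm _),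
    ← ncard_orientedReps hp hp24 huv hv hm, ncard_orientedReps_sq_mul hp hp24 huv hv]
  congr 1
  ext ⟨y, z⟩
  have hmod : (u * y + 8 * v * z) % 3 = y % 3 := by
    obtain ⟨w, rfl⟩ := hv3
    obtain ⟨t, rfl⟩ : ∃ t, u = 1 + 3 * t := ⟨u / 3, by omega⟩
    have hsum : (1 + 3 * t) * y + 8 * (3 * w) * z = y + 3 * (t * y + 8 * w * z) := by ring
    rw [hsum, Int.add_mul_emod_self_left]
  refine and_congr_right fun h => and_congr (by rw [← hmod]; rfl) ⟨fun hndvd => ?_, fun hdvd => ?_⟩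
  · refine ⟨fun hy => hndvd ?_, (dvd_sub_or_dvd_add hp huv hm h).resolve_right hndvd⟩
    exact dvd_add (Dvd.dvd.mul_left hy u)
      (Dvd.dvd.mul_left ((dvd_fst_iff_dvd_snd hp hp24 hm h).1 hy) _)
  · exact not_dvd_add_of_dvd_sub hp hp24 huv hv hdvd.1 hdvd.2

lemma not_three_dvd_of_sq_add_twentyFour_mul_sq_eq (hp24 : IsCoprime p 24)
    (huv : u ^ 2 + 24 * v ^ 2 = p ^ 2) : ¬ 3 ∣ u := by
  have := sq_emod_three (not_three_dvd_of_isCoprime hp24)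
  exact not_three_dvd_of_sq (by omega)

lemma ncard_primitiveReps_sq_mul_of_three_dvd (hp : Prime p) (hp24 : IsCoprime p 24)
    (huv : u ^ 2 + 24 * v ^ 2 = p ^ 2) (hv : ¬ p ∣ v) (hv3 : 3 ∣ v) {m : ℤ} (hm : p ∣ m) :
    (primitiveReps p (p ^ 2 * m)).ncard = (primitiveReps p m).ncard := by
  have hu3 := not_three_dvd_of_sq_add_twentyFour_mul_sq_eq hp24 huv
  rcases (by omega : u % 3 = 1 ∨ -u % 3 = 1) with h | h
  · exact ncard_primitiveReps_sq_mul_of_emod_three_eq_one hp hp24 huv hv h hv3 hm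
  · exact ncard_primitiveReps_sq_mul_of_emod_three_eq_one hp hp24 (by rwa [neg_sq]) hv h hv3 hm

lemma mem_formReps_eleven {y z : ℤ} : (y, z) ∈ formReps 3 8 11 ↔ y ^ 2 = 1 ∧ z ^ 2 = 1 := by
  change 3 * y ^ 2 + 8 * z ^ 2 = 11 ↔ _
  have := sq_nonneg y
  have := sq_nonneg z
  omega

lemma ncard_primitiveReps_sq_mul_eleven (hp : Prime p) (hp24 : IsCoprime p 24) (hp11 : ¬ p ∣ 11)
    (huv : u ^ 2 + 24 * v ^ 2 = p ^ 2) (hv : ¬ p ∣ v) (hv3 : ¬ 3 ∣ v) :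
    (primitiveReps p (p ^ 2 * 11)).ncard = 1 := by
  have hu3 := not_three_dvd_of_sq_add_twentyFour_mul_sq_eq hp24 huv
  have hndvd {y z : ℤ} (hy : y ^ 2 = 1) (hz : z ^ 2 = 1) : ¬ p ∣ u * y + 8 * v * z := by
    rintro ⟨k, hk⟩
    have h : p ∣ 8 * (11 * v ^ 2) := ⟨p - k * (u * y - 8 * v * z), by
      linear_combination huv - (u * y - 8 * v * z) * hk + u ^ 2 * hy - 64 * v ^ 2 * hz⟩
    rcases hp.dvd_or_dvd (dvd_of_dvd_mul_of_isCoprime hp24 (by norm_num) h) with h | h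
    exacts [hp11 h, hv (hp.dvd_of_dvd_pow h)]
  obtain ⟨a, ha, hua⟩ := exists_sq_eq_three_dvd_sub (y := 1) hu3 (by norm_num)
  obtain ⟨b, hb, hvb⟩ := exists_sq_eq_three_dvd_sub (y := 1) hv3 (by norm_num)
  rw [← ncard_orientedReps hp hp24 huv hv (Dvd.dvd.mul_right (dvd_pow_self p two_ne_zero) _),
    ncard_orientedReps_sq_mul hp hp24 huv hv, Set.ncard_eq_one]
  refine ⟨(-a, b), Set.ext ?_⟩
  rintro ⟨y, z⟩
  rw [Set.mem_singleton_iff, Prod.mk.injEq, Set.mem_sep_iff, mem_formReps_eleven]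
  rw [one_pow, sq_eq_one_iff] at ha hb
  constructor
  · rintro ⟨⟨hy, hz⟩, h, -⟩
    rw [sq_eq_one_iff] at hy hz
    dsimp only [rotate] at h
    rcases hy with rfl | rfl <;> rcases hz with rfl | rfl <;> omega
  · rintro ⟨rfl, rfl⟩
    have hy : (-a) ^ 2 = 1 := by rw [neg_sq, sq_eq_one_iff]; exact ha
    have hz : z ^ 2 = 1 := sq_eq_one_iff.2 hb
    refine ⟨⟨hy, hz⟩, ?_, hndvd hy hz⟩
    dsimp only [rotate]
    rcases ha with rfl | rfl <;> rcases hb with rfl | rfl <;> omega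

end Rotation

lemma ncard_coprimeReps_eleven : (coprimeReps 11).ncard = 1 := by
  refine Set.ncard_eq_one.2 ⟨(1, 1), Set.ext ?_⟩
  rintro ⟨y, z⟩
  rw [coprimeReps, Set.mem_sep_iff, mem_formReps_eleven, Set.mem_singleton_iff, Prod.mk.injEq,
    sq_eq_one_iff, sq_eq_one_iff]
  dsimp only
  omega

lemma three_dvd_of_odd_ncard_coprimeReps (hp : Prime p) (hp0 : 0 < p) (hp24 : IsCoprime p 24)
    (hp11 : ¬ p ∣ 11) (hodd : Odd (coprimeReps (p ^ 2 * 11)).ncard) {u v : ℤ}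
    (huv : u ^ 2 + 24 * v ^ 2 = p ^ 2) (hv : ¬ p ∣ v) : 3 ∣ v := by
  by_contra hv3
  rw [ncard_coprimeReps_sq_mul hp hp0 hp24, ncard_coprimeReps_eleven,
    ncard_primitiveReps_sq_mul_eleven hp hp24 hp11 huv hv hv3] at hodd
  exact absurd hodd (by decide)

lemma ncard_primitiveReps_sq_mul (hp : Prime p) (hp0 : 0 < p) (hp24 : IsCoprime p 24)
    (hp11 : ¬ p ∣ 11) (hodd : Odd (coprimeReps (p ^ 2 * 11)).ncard) {m : ℤ} (hm : p ∣ m) :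
    (primitiveReps p (p ^ 2 * m)).ncard = (primitiveReps p m).ncard := by
  by_cases hs : ∃ s : ℤ, p ∣ s ^ 2 + 6
  · obtain ⟨s, hs⟩ := hs
    obtain ⟨u, v, huv, hv⟩ := exists_sq_add_twentyFour_mul_sq_eq hp hp0 hp24 hs
    exact ncard_primitiveReps_sq_mul_of_three_dvd hp hp24 huv hv
      (three_dvd_of_odd_ncard_coprimeReps hp hp0 hp24 hp11 hodd huv hv) hm
  · have hempty {m : ℤ} (hm : p ∣ m) : primitiveReps p m = ∅ :=
      Set.eq_empty_of_forall_notMem fun _ hq => hs (exists_dvd_sq_add_six hp hp24 hm hq)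
    rw [hempty hm, hempty (Dvd.dvd.mul_left hm _)]

lemma ncard_coprimeReps_pow_mul (hp : Prime p) (hp0 : 0 < p) (hp24 : IsCoprime p 24)
    (hp11 : ¬ p ∣ 11) (hodd : Odd (coprimeReps (p ^ 2 * 11)).ncard) {m : ℤ} (hm : ¬ p ∣ m)
    (j : ℕ) : (coprimeReps (p ^ (2 * j + 1) * m)).ncard =
      (j + 1) * (primitiveReps p (p * m)).ncard := by
  have hpow (j : ℕ) : p ^ (2 * (j + 1) + 1) * m = p ^ 2 * (p ^ (2 * j + 1) * m) := by ring
  have hprim (j : ℕ) :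
      (primitiveReps p (p ^ (2 * j + 1) * m)).ncard = (primitiveReps p (p * m)).ncard := by
    induction j with
    | zero => simp
    | succ j ih =>
      rw [hpow, ncard_primitiveReps_sq_mul hp hp0 hp24 hp11 hodd, ih]
      exact Dvd.dvd.mul_right (dvd_pow_self p (Nat.succ_ne_zero _)) m
  induction j with
  | zero =>
    have hp2 : ¬ p ^ 2 ∣ p * m := by rwa [pow_two, mul_dvd_mul_iff_left hp.ne_zero]
    rw [primitiveReps_eq_coprimeReps hp hp24 (dvd_mul_right p m) hp2]
    simp
  | succ j ih =>
    rw [hpow, ncard_coprimeReps_sq_mul hp hp0 hp24, ih, ← hpow, hprim]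
    ring

end Prime

lemma natCast_b21_four_mul_add {t : ℕ} (ht : t % 24 = 1) (c : ℕ) :
    (b21 (4 * c + (11 * t - 5) / 6) : ZMod 2) = (coprimeReps (24 * c + 11 * t)).ncard := by
  obtain ⟨d, rfl⟩ : ∃ d, t = 24 * d + 1 := ⟨t / 24, by omega⟩
  have hindex : 4 * c + (11 * (24 * d + 1) - 5) / 6 = 4 * (c + 11 * d) + 1 := by omega
  rw [hindex, natCast_b21_four_mul_add_one]
  congr 3
  push_cast
  ring

lemma odd_ncard_coprimeReps_of_odd_b21 {t : ℕ} (ht : t % 24 = 1)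
    (h : Odd (b21 ((11 * t - 5) / 6))) : Odd (coprimeReps (t * 11)).ncard := by
  have hparity := natCast_b21_four_mul_add ht 0
  rw [mul_zero, zero_add, Nat.cast_zero, mul_zero, zero_add, mul_comm (11 : ℤ)] at hparity
  rwa [← ZMod.natCast_ne_zero_iff_odd, hparity, ZMod.natCast_ne_zero_iff_odd] at h

lemma coprime_twentyFour_of_prime {p : ℕ} (hp : p.Prime) (hp5 : 5 ≤ p) : p.Coprime 24 :=
  (Nat.Coprime.mul_right (Nat.coprime_primes hp Nat.prime_two |>.2 (by omega) |>.pow_right 3)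
    (Nat.coprime_primes hp Nat.prime_three |>.2 (by omega)) :)

lemma pow_even_mod_twentyFour {p : ℕ} (hp : p.Coprime 24) (j : ℕ) : p ^ (2 * j) % 24 = 1 := by
  have hunits : ∀ a : (ZMod 24)ˣ, a ^ 2 = 1 := by decide
  have h : ((p ^ (2 * j) : ℕ) : ZMod 24) = (1 : ℕ) := by
    rw [Nat.cast_pow, pow_mul, ← ZMod.coe_unitOfCoprime p hp, ← Units.val_pow_eq_pow_val, hunits,
      Units.val_one, one_pow, Nat.cast_one]
  exact (ZMod.natCast_eq_natCast_iff' _ _ _).1 h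

theorem stmt_1 (p : ℕ) (hp : p.Prime) (hp5 : 5 ≤ p) (hp11 : p ≠ 11)
    (h : Odd (b21 ((11 * p ^ 2 - 5) / 6)))
    (n k β : ℕ) (hβ1 : 1 ≤ β) (hβp : β < p) :
    b21 (4 * p ^ (4 * k + 4) * n + 4 * p ^ (4 * k + 3) * β
      + (11 * p ^ (4 * k + 4) - 5) / 6) % 2 = 0 := by
  have hcop : p.Coprime 24 := coprime_twentyFour_of_prime hp hp5
  have hpz : Prime (p : ℤ) := Nat.prime_iff_prime_int.1 hp
  have hp24 : IsCoprime (p : ℤ) 24 := Nat.isCoprime_iff_coprime.2 hcop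
  have hndvd11 : ¬ (p : ℤ) ∣ 11 := by
    exact_mod_cast (Nat.prime_dvd_prime_iff_eq hp (by norm_num)).not.2 hp11
  have hodd : Odd (coprimeReps (p ^ 2 * 11)).ncard := by
    exact_mod_cast odd_ncard_coprimeReps_of_odd_b21 (pow_even_mod_twentyFour hcop 1) h
  have hndvd : ¬ (p : ℤ) ∣ p * (24 * n + 11) + 24 * β := by
    rw [dvd_add_right (dvd_mul_right _ _)]
    exact fun hβ => Nat.not_dvd_of_pos_of_lt hβ1 hβp
      (Int.natCast_dvd_natCast.1 (hp24.dvd_of_dvd_mul_left hβ))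
  have hindex : 4 * p ^ (4 * k + 4) * n + 4 * p ^ (4 * k + 3) * β =
      4 * (p ^ (4 * k + 3) * (p * n + β)) := by ring
  have hform : (24 * (p ^ (4 * k + 3) * (p * n + β) : ℕ) + 11 * (p ^ (2 * (2 * k + 2)) : ℕ) : ℤ) =
      p ^ (2 * (2 * k + 1) + 1) * (p * (24 * n + 11) + 24 * β) := by
    push_cast
    ring
  have hexp : 4 * k + 4 = 2 * (2 * k + 2) := by ring
  rw [hindex, hexp, ← Nat.even_iff, ← ZMod.natCast_eq_zero_iff_even,
    natCast_b21_four_mul_add (pow_even_mod_twentyFour hcop _), hform,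
    ncard_coprimeReps_pow_mul hpz (by exact_mod_cast hp.pos) hp24 hndvd11 hodd hndvd,
    ZMod.natCast_eq_zero_iff_even]
  exact Even.mul_right ⟨k + 1, by ring⟩ _
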